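/- Let k ≥ 1, β ∈ (0, min(2,k)), and S(t,x) the heat kernel on ℝ^k. There exists a constant C > 0 such that for all s ≥ 0 and x, y ∈ ℝ^k, ∫_0^s dr ∫_{ℝ^k} dz ∫_{ℝ^k} dv ‖z-v‖^{-β} |S(r, x-z) - S(r, y-z)| · |S(r, x-v) - S(r, y-v)| ≤ C ‖x - y‖^{2-β}. -/

import Mathlib

open Real MeasureTheory

noncomputable def heatKernel (k : ℕ) (t : ℝ) (x : EuclideanSpace ℝ (Fin k)) : ℝ :=
  (2 * Real.pi * t) ^ (-(k : ℝ) / 2) * Real.exp (-‖x‖ ^ 2 / (2 * t))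

/-!
Write `D(z) = |S(r, x - z) - S(r, y - z)|`. The exponential in `S(r, ·)` is the square of the one in
`S(2r, ·)`, so factoring a difference of squares gives, with `m = min (1, ‖x - y‖ / √r)`,
`D(z) ≤ 2 ^ (k / 2) m (S(2r, x - z) + S(2r, y - z))`. Hence `D` has `L¹` norm `O(m)` and sup norm
`O(m r ^ (-k / 2))`. Splitting the kernel `‖z - v‖ ^ (-β)` at distance `√r` and using the sup norm
near the diagonal and the `L¹` norm away from it bounds the double integral over `z, v` by
`O(r ^ (-β / 2) m²)`. Finally, `∫₀^∞ r ^ (-β / 2) min (1, ‖x - y‖² / r) dr` is a multiple of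
`‖x - y‖ ^ (2 - β)`, and it is finite at `0` because `β < 2` and at `∞` because `0 < β`.
-/

open Metric Set Module

section RieszEnergy

variable {E : Type*} [NormedAddCommGroup E] {β R : ℝ}

lemma norm_rpow_neg_mul_le_add_indicator_ball {M a : ℝ} (hβ : 0 ≤ β) (hR : 0 < R)
    (ha : 0 ≤ a) (haM : a ≤ M) (u : E) :
    ‖u‖ ^ (-β) * a ≤ R ^ (-β) * a + M * (ball 0 R).indicator (fun w : E ↦ ‖w‖ ^ (-β)) u := by
  by_cases hu : u ∈ ball 0 R
  · rw [indicator_of_mem hu, mul_comm]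
    exact le_add_of_nonneg_of_le (by positivity) (by gcongr)
  · have hRu : R ≤ ‖u‖ := by simpa using hu
    rw [indicator_of_notMem hu, mul_zero, add_zero]
    gcongr ?_ * a
    exact rpow_le_rpow_of_nonpos hR hRu (neg_nonpos.2 hβ)

variable [MeasurableSpace E] (μ : Measure E) {f : E → ℝ}

/-- The Riesz energy `∬ ‖z - v‖ ^ (-β) f(z) f(v)` of a density `f` with respect to `μ`. The kernel
takes the junk value `0 ^ (-β) = 0` on the diagonal, which does not matter for atomless `μ`. -/
noncomputable def rieszEnergy (β : ℝ) (f : E → ℝ) : ℝ :=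
  ∫ z, ∫ v, ‖z - v‖ ^ (-β) * f z * f v ∂μ ∂μ

lemma rieszEnergy_nonneg (β : ℝ) (hf : ∀ u, 0 ≤ f u) : 0 ≤ rieszEnergy μ β f :=
  integral_nonneg fun z ↦ integral_nonneg fun v ↦
    mul_nonneg (mul_nonneg (by positivity) (hf z)) (hf v)

variable [NormedSpace ℝ E] [FiniteDimensional ℝ E] [BorelSpace E] [μ.IsAddHaarMeasure]

lemma integrableOn_ball_norm_rpow_neg (hβ : 0 ≤ β) (hβE : β < finrank ℝ E) (R : ℝ) :
    IntegrableOn (fun u : E ↦ ‖u‖ ^ (-β)) (ball 0 R) μ := by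
  have finrank_pos : 0 < finrank ℝ E := by exact_mod_cast hβ.trans_lt hβE
  refine integrableOn_ball_of_norm_le_rpow finrank_pos (C := 1) hβE (.of_forall fun u ↦ ?_)
    (measurable_norm.pow_const _).aestronglyMeasurable
  rw [one_mul, norm_of_nonneg (by positivity)]

lemma setIntegral_ball_norm_rpow_neg (β : ℝ) (hR : 0 < R) :
    ∫ u in ball (0 : E) R, ‖u‖ ^ (-β) ∂μ =
      R ^ (finrank ℝ E - β) * ∫ u in ball (0 : E) 1, ‖u‖ ^ (-β) ∂μ := by
  have scaling := Measure.setIntegral_comp_smul_of_pos μ (fun u : E ↦ ‖u‖ ^ (-β)) (ball 0 1) hR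
  rw [smul_unitBall_of_pos hR] at scaling
  simp only [norm_smul, norm_of_nonneg hR.le, mul_rpow hR.le (norm_nonneg _), integral_const_mul,
    smul_eq_mul] at scaling
  rw [sub_eq_add_neg, rpow_add hR, mul_assoc, scaling, rpow_natCast,
    mul_inv_cancel_left₀ (by positivity)]

variable {M : ℝ}

lemma integral_norm_sub_rpow_neg_mul_le (hβ : 0 ≤ β) (hβE : β < finrank ℝ E)
    (hR : 0 < R) (hf : Integrable f μ) (hf0 : ∀ u, 0 ≤ f u) (hfM : ∀ u, f u ≤ M) (z : E) :
    ∫ v, ‖z - v‖ ^ (-β) * f v ∂μ ≤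
      R ^ (-β) * ∫ u, f u ∂μ + M * ∫ u in ball (0 : E) R, ‖u‖ ^ (-β) ∂μ := by
  set kernel : E → ℝ := (ball 0 R).indicator fun w ↦ ‖w‖ ^ (-β)
  have kernel_integrable : Integrable (fun v ↦ kernel (z - v)) μ :=
    ((integrableOn_ball_norm_rpow_neg μ hβ hβE R).integrable_indicator
      measurableSet_ball).comp_sub_left z
  calc ∫ v, ‖z - v‖ ^ (-β) * f v ∂μ
      ≤ ∫ v, R ^ (-β) * f v + M * kernel (z - v) ∂μ :=
        integral_mono_of_nonneg (.of_forall fun v ↦ mul_nonneg (by positivity) (hf0 v))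
          ((hf.const_mul _).add (kernel_integrable.const_mul _))
          (.of_forall fun v ↦
            norm_rpow_neg_mul_le_add_indicator_ball hβ hR (hf0 v) (hfM v) (z - v))
    _ = _ := by
        rw [integral_add (hf.const_mul _) (kernel_integrable.const_mul _), integral_const_mul,
          integral_const_mul, integral_sub_left_eq_self kernel μ z,
          integral_indicator measurableSet_ball]

lemma rieszEnergy_le (hβ : 0 ≤ β) (hβE : β < finrank ℝ E) (hR : 0 < R)
    (hf : Integrable f μ) (hf0 : ∀ u, 0 ≤ f u) (hfM : ∀ u, f u ≤ M) :
    rieszEnergy μ β f ≤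
      (∫ u, f u ∂μ) *
        (R ^ (-β) * ∫ u, f u ∂μ +
          M * (R ^ (finrank ℝ E - β) * ∫ u in ball (0 : E) 1, ‖u‖ ^ (-β) ∂μ)) := by
  rw [← setIntegral_ball_norm_rpow_neg μ β hR, ← integral_mul_const]
  refine integral_mono_of_nonneg (.of_forall fun z ↦ integral_nonneg fun v ↦ ?_)
    (hf.mul_const _) (.of_forall fun z ↦ ?_)
  · exact mul_nonneg (mul_nonneg (by positivity) (hf0 z)) (hf0 v)
  · simp only [mul_comm _ (f z), mul_assoc, integral_const_mul]
    exact mul_le_mul_of_nonneg_left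
      (integral_norm_sub_rpow_neg_mul_le μ hβ hβE hR hf hf0 hfM z) (hf0 z)

end RieszEnergy

section GaussianIncrement

lemma abs_mul_exp_neg_sq_div_four_le_two (c : ℝ) : |c| * exp (-c ^ 2 / 4) ≤ 2 := by
  rw [neg_div, exp_neg, ← div_eq_mul_inv, div_le_iff₀ (exp_pos _)]
  nlinarith [add_one_le_exp (c ^ 2 / 4), sq_nonneg (|c| - 1), sq_abs c]

lemma lipschitzWith_exp_neg_sq_div_four : LipschitzWith 1 fun c : ℝ ↦ exp (-c ^ 2 / 4) := by
  have hderiv (c : ℝ) :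
      HasDerivAt (fun c : ℝ ↦ exp (-c ^ 2 / 4)) (exp (-c ^ 2 / 4) * (-(2 * c) / 4)) c := by
    simpa using ((hasDerivAt_pow 2 c).neg.div_const 4).exp
  refine lipschitzWith_of_nnnorm_deriv_le (fun c ↦ (hderiv c).differentiableAt) fun c ↦ ?_
  rw [(hderiv c).deriv, ← NNReal.coe_le_coe, coe_nnnorm, norm_eq_abs, abs_mul, abs_exp, abs_div,
    abs_neg, abs_mul, NNReal.coe_one, abs_two, abs_of_pos (by norm_num : (0 : ℝ) < 4)]
  linarith [abs_mul_exp_neg_sq_div_four_le_two c]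

lemma abs_exp_neg_sq_div_two_sub_le (a b : ℝ) :
    |exp (-a ^ 2 / 2) - exp (-b ^ 2 / 2)| ≤
      min 1 |a - b| * (exp (-a ^ 2 / 4) + exp (-b ^ 2 / 4)) := by
  have exp_eq_mul_self (c : ℝ) : exp (-c ^ 2 / 2) = exp (-c ^ 2 / 4) * exp (-c ^ 2 / 4) := by
    rw [← exp_add]; ring_nf
  have exp_mem_Icc (c : ℝ) : exp (-c ^ 2 / 4) ∈ Icc 0 1 :=
    ⟨(exp_pos _).le, exp_le_one_iff.2 (by linarith [sq_nonneg c])⟩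
  have sub_le_one : |exp (-a ^ 2 / 4) - exp (-b ^ 2 / 4)| ≤ 1 := by
    simpa using abs_sub_le_of_le_of_le (exp_mem_Icc a).1 (exp_mem_Icc a).2
      (exp_mem_Icc b).1 (exp_mem_Icc b).2
  have sub_le_abs : |exp (-a ^ 2 / 4) - exp (-b ^ 2 / 4)| ≤ |a - b| := by
    simpa [dist_eq] using lipschitzWith_exp_neg_sq_div_four.dist_le_mul a b
  rw [exp_eq_mul_self, exp_eq_mul_self, mul_self_sub_mul_self, abs_mul,
    abs_of_pos (by positivity), mul_comm]
  gcongr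
  exact le_min sub_le_one sub_le_abs

end GaussianIncrement

section HeatKernel

variable {k : ℕ} {t : ℝ}

lemma heatKernel_le (ht : 0 ≤ t) (x : EuclideanSpace ℝ (Fin k)) :
    heatKernel k t x ≤ (2 * π * t) ^ (-(k : ℝ) / 2) := by
  refine mul_le_of_le_one_right (by positivity) (exp_le_one_iff.2 ?_)
  rw [neg_div, neg_nonpos]
  positivity

lemma integral_heatKernel (k : ℕ) (ht : 0 < t) : ∫ x, heatKernel k t x = 1 := by
  have exponent_eq (x : EuclideanSpace ℝ (Fin k)) :
      -‖x‖ ^ 2 / (2 * t) = -(1 / (2 * t)) * ‖x‖ ^ 2 := by ring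
  simp only [heatKernel, exponent_eq, integral_const_mul]
  rw [GaussianFourier.integral_rexp_neg_mul_sq_norm (by positivity), finrank_euclideanSpace_fin,
    show π / (1 / (2 * t)) = 2 * π * t by field_simp, ← rpow_add (by positivity), neg_div,
    neg_add_cancel, rpow_zero]

lemma integrable_heatKernel (k : ℕ) (ht : 0 < t) : Integrable (heatKernel k t) :=
  .of_integral_ne_zero (by simp [integral_heatKernel k ht])

lemma two_rpow_mul_heatKernel_two_mul (ht : 0 < t) (x : EuclideanSpace ℝ (Fin k)) :
    2 ^ ((k : ℝ) / 2) * heatKernel k (2 * t) x =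
      (2 * π * t) ^ (-(k : ℝ) / 2) * exp (-‖x‖ ^ 2 / (4 * t)) := by
  rw [heatKernel, ← mul_assoc, mul_left_comm (2 * π) 2 t, mul_rpow zero_le_two (by positivity),
    ← mul_assoc, ← rpow_add two_pos, neg_div, add_neg_cancel, rpow_zero, one_mul]
  ring_nf

lemma abs_heatKernel_sub_le (ht : 0 < t) (x y : EuclideanSpace ℝ (Fin k)) :
    |heatKernel k t x - heatKernel k t y| ≤
      min 1 (‖x - y‖ / √t) *
        (2 ^ ((k : ℝ) / 2) * (heatKernel k (2 * t) x + heatKernel k (2 * t) y)) := by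
  have exponent_eq (a c : ℝ) : -a ^ 2 / (c * t) = -(a / √t) ^ 2 / c := by
    rw [div_pow, sq_sqrt ht.le, ← neg_div, div_div, mul_comm]
  have norm_div_sub_le : |‖x‖ / √t - ‖y‖ / √t| ≤ ‖x - y‖ / √t := by
    rw [← sub_div, abs_div, abs_of_nonneg (sqrt_nonneg t)]
    gcongr
    exact abs_norm_sub_norm_le x y
  rw [mul_add (2 ^ _), two_rpow_mul_heatKernel_two_mul ht, two_rpow_mul_heatKernel_two_mul ht]
  simp only [heatKernel, exponent_eq]
  rw [← mul_sub, ← mul_add, abs_mul, abs_of_nonneg (by positivity), mul_left_comm]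
  gcongr
  exact (abs_exp_neg_sq_div_two_sub_le _ _).trans (by gcongr)

lemma abs_heatKernel_sub_le_sup (ht : 0 < t) (x y : EuclideanSpace ℝ (Fin k)) :
    |heatKernel k t x - heatKernel k t y| ≤
      min 1 (‖x - y‖ / √t) * (2 * 2 ^ ((k : ℝ) / 2)) * (2 * π * (2 * t)) ^ (-(k : ℝ) / 2) :=
  calc |heatKernel k t x - heatKernel k t y|
      ≤ min 1 (‖x - y‖ / √t) *
          (2 ^ ((k : ℝ) / 2) * (heatKernel k (2 * t) x + heatKernel k (2 * t) y)) :=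
        abs_heatKernel_sub_le ht x y
    _ ≤ min 1 (‖x - y‖ / √t) *
          (2 ^ ((k : ℝ) / 2) *
            ((2 * π * (2 * t)) ^ (-(k : ℝ) / 2) + (2 * π * (2 * t)) ^ (-(k : ℝ) / 2))) := by
        gcongr <;> exact heatKernel_le (by positivity) _
    _ = _ := by ring

lemma integrable_abs_heatKernel_sub (ht : 0 < t) (x y : EuclideanSpace ℝ (Fin k)) :
    Integrable fun z ↦ |heatKernel k t (x - z) - heatKernel k t (y - z)| :=
  (((integrable_heatKernel k ht).comp_sub_left x).sub
    ((integrable_heatKernel k ht).comp_sub_left y)).abs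

lemma integral_abs_heatKernel_sub_le (ht : 0 < t) (x y : EuclideanSpace ℝ (Fin k)) :
    ∫ z, |heatKernel k t (x - z) - heatKernel k t (y - z)| ≤
      min 1 (‖x - y‖ / √t) * (2 * 2 ^ ((k : ℝ) / 2)) := by
  have translate_integrable (w : EuclideanSpace ℝ (Fin k)) :
      Integrable fun z ↦ heatKernel k (2 * t) (w - z) :=
    (integrable_heatKernel k (by positivity)).comp_sub_left w
  have translate_integral (w : EuclideanSpace ℝ (Fin k)) :
      ∫ z, heatKernel k (2 * t) (w - z) = 1 := by
    rw [integral_sub_left_eq_self (heatKernel k (2 * t)) volume w,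
      integral_heatKernel k (by positivity)]
  calc ∫ z, |heatKernel k t (x - z) - heatKernel k t (y - z)|
      ≤ ∫ z, min 1 (‖x - y‖ / √t) *
          (2 ^ ((k : ℝ) / 2) * (heatKernel k (2 * t) (x - z) + heatKernel k (2 * t) (y - z))) :=
        integral_mono (integrable_abs_heatKernel_sub ht x y)
          ((((translate_integrable x).add (translate_integrable y)).const_mul _).const_mul _)
          fun z ↦ by simpa using abs_heatKernel_sub_le ht (x - z) (y - z)
    _ = min 1 (‖x - y‖ / √t) * (2 * 2 ^ ((k : ℝ) / 2)) := by
        rw [integral_const_mul, integral_const_mul,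
          integral_add (translate_integrable x) (translate_integrable y), translate_integral,
          translate_integral]
        ring

lemma min_one_div_sqrt_sq {h : ℝ} (hh : 0 ≤ h) (ht : 0 ≤ t) :
    min 1 (h / √t) ^ 2 = min 1 (h ^ 2 / t) := by
  have sq_min : min 1 (h / √t) ^ 2 = min (1 ^ 2) ((h / √t) ^ 2) :=
    pow_left_monotoneOn.map_min (mem_ofPred.2 zero_le_one) (mem_ofPred.2 (by positivity))
  rw [sq_min, one_pow, div_pow, sq_sqrt ht]

/-- The energy bound is applied at the diffusive radius `R = √t`, where both of its terms scale
like `t ^ (-β / 2)`. -/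
lemma exists_rieszEnergy_heatKernel_sub_le {β : ℝ} (hβ : 0 ≤ β) (hβk : β < k) :
    ∃ A : ℝ, 0 < A ∧ ∀ t : ℝ, 0 < t → ∀ x y : EuclideanSpace ℝ (Fin k),
      rieszEnergy volume β (fun z ↦ |heatKernel k t (x - z) - heatKernel k t (y - z)|) ≤
        A * (t ^ (-(β / 2)) * min 1 (‖x - y‖ ^ 2 / t)) := by
  set B : ℝ := ∫ u in ball (0 : EuclideanSpace ℝ (Fin k)) 1, ‖u‖ ^ (-β)
  have : 0 ≤ B := integral_nonneg fun u ↦ by positivity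
  set L : ℝ := 2 * 2 ^ ((k : ℝ) / 2)
  set K : ℝ := (2 * π * 2) ^ (-(k : ℝ) / 2)
  refine ⟨L ^ 2 * (1 + K * B), by positivity, fun t ht x y ↦ ?_⟩
  set m : ℝ := min 1 (‖x - y‖ / √t)
  have sup_le (z : EuclideanSpace ℝ (Fin k)) :
      |heatKernel k t (x - z) - heatKernel k t (y - z)| ≤ m * L * (K * t ^ (-(k : ℝ) / 2)) := by
    rw [← mul_rpow (by positivity) ht.le, mul_assoc (2 * π)]
    simpa only [sub_sub_sub_cancel_right] using abs_heatKernel_sub_le_sup ht (x - z) (y - z)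
  have sqrt_rpow (p : ℝ) : √t ^ p = t ^ (p / 2) := by
    rw [sqrt_eq_rpow, ← rpow_mul ht.le]; ring_nf
  have rpow_mul_rpow : t ^ (-(k : ℝ) / 2) * t ^ (((k : ℝ) - β) / 2) = t ^ (-(β / 2)) := by
    rw [← rpow_add ht]; ring_nf
  calc rieszEnergy volume β (fun z ↦ |heatKernel k t (x - z) - heatKernel k t (y - z)|)
      ≤ _ := rieszEnergy_le volume hβ (by simpa using hβk) (sqrt_pos.2 ht)
        (integrable_abs_heatKernel_sub ht x y) (fun z ↦ abs_nonneg _) sup_le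
    _ ≤ m * L * (√t ^ (-β) * (m * L) +
          m * L * (K * t ^ (-(k : ℝ) / 2)) * (√t ^ ((k : ℝ) - β) * B)) := by
        rw [finrank_euclideanSpace_fin]
        gcongr <;> exact integral_abs_heatKernel_sub_le ht x y
    _ = L ^ 2 * (1 + K * B) * (t ^ (-(β / 2)) * m ^ 2) := by
        rw [sqrt_rpow, sqrt_rpow, neg_div, ← rpow_mul_rpow]
        ring
    _ = _ := by rw [min_one_div_sqrt_sq (norm_nonneg _) ht.le]

end HeatKernel

section TimeIntegral

variable {a c : ℝ}

lemma rpow_neg_mul_min_one_div_eqOn_Ioc :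
    EqOn (fun r : ℝ ↦ r ^ (-a) * min 1 (c / r)) (fun r ↦ r ^ (-a)) (Ioc 0 c) := fun r hr ↦ by
  simp only [min_eq_left ((one_le_div hr.1).2 hr.2), mul_one]

lemma rpow_neg_mul_min_one_div_eqOn_Ioi (hc : 0 ≤ c) :
    EqOn (fun r : ℝ ↦ r ^ (-a) * min 1 (c / r)) (fun r ↦ c * r ^ (-a - 1)) (Ioi c) :=
  fun r hr ↦ by
    have hr0 : 0 < r := hc.trans_lt hr
    simp only [min_eq_right ((div_le_one hr0).2 (le_of_lt hr)), rpow_sub_one hr0.ne']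
    ring

lemma integrableOn_Ioc_rpow_neg_mul_min (ha : a < 1) :
    IntegrableOn (fun r : ℝ ↦ r ^ (-a) * min 1 (c / r)) (Ioc 0 c) := by
  refine IntegrableOn.congr_fun ?_ rpow_neg_mul_min_one_div_eqOn_Ioc.symm measurableSet_Ioc
  exact (intervalIntegral.intervalIntegrable_rpow' (by linarith)).1

lemma integrableOn_Ioi_rpow_neg_mul_min (ha : 0 < a) (hc : 0 < c) :
    IntegrableOn (fun r : ℝ ↦ r ^ (-a) * min 1 (c / r)) (Ioi c) := by
  refine IntegrableOn.congr_fun ?_ (rpow_neg_mul_min_one_div_eqOn_Ioi hc.le).symm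
    measurableSet_Ioi
  exact (integrableOn_Ioi_rpow_of_lt (by linarith) hc).const_mul c

lemma integrableOn_Ioi_zero_rpow_neg_mul_min (ha : 0 < a) (ha' : a < 1) (hc : 0 ≤ c) :
    IntegrableOn (fun r : ℝ ↦ r ^ (-a) * min 1 (c / r)) (Ioi 0) := by
  rcases hc.eq_or_lt with rfl | hc
  · simp
  rw [← Ioc_union_Ioi_eq_Ioi hc.le]
  exact (integrableOn_Ioc_rpow_neg_mul_min ha').union (integrableOn_Ioi_rpow_neg_mul_min ha hc)

lemma integral_Ioi_zero_rpow_neg_mul_min (ha : 0 < a) (ha' : a < 1) (hc : 0 ≤ c) :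
    ∫ r in Ioi (0 : ℝ), r ^ (-a) * min 1 (c / r) = (a * (1 - a))⁻¹ * c ^ (1 - a) := by
  have h1a : 1 - a ≠ 0 := by linarith
  rcases hc.eq_or_lt with rfl | hc
  · simp [zero_rpow h1a]
  have integral_Ioc : ∫ r in Ioc 0 c, r ^ (-a) * min 1 (c / r) = c ^ (1 - a) / (1 - a) := by
    rw [setIntegral_congr_fun measurableSet_Ioc rpow_neg_mul_min_one_div_eqOn_Ioc,
      ← intervalIntegral.integral_of_le hc.le, integral_rpow (.inl (by linarith)),
      neg_add_eq_sub, zero_rpow h1a, sub_zero]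
  have integral_Ioi : ∫ r in Ioi c, r ^ (-a) * min 1 (c / r) = c ^ (1 - a) / a := by
    rw [setIntegral_congr_fun measurableSet_Ioi (rpow_neg_mul_min_one_div_eqOn_Ioi hc.le),
      integral_const_mul, integral_Ioi_rpow_of_lt (by linarith) hc, sub_add_cancel,
      neg_div_neg_eq, sub_eq_add_neg 1 a, rpow_add hc, rpow_one, mul_div_assoc]
  rw [← Ioc_union_Ioi_eq_Ioi hc.le, setIntegral_union (Ioc_disjoint_Ioi le_rfl) measurableSet_Ioi
    (integrableOn_Ioc_rpow_neg_mul_min ha') (integrableOn_Ioi_rpow_neg_mul_min ha hc),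
    integral_Ioc, integral_Ioi]
  field_simp
  ring

lemma setIntegral_Ioo_le_of_le_rpow_neg_mul_min {F : ℝ → ℝ} {A : ℝ} (ha : 0 < a)
    (ha' : a < 1) (hc : 0 ≤ c) (hF0 : ∀ r, 0 < r → 0 ≤ F r)
    (hF : ∀ r, 0 < r → F r ≤ A * (r ^ (-a) * min 1 (c / r))) (s : ℝ) :
    ∫ r in Ioo 0 s, F r ≤ A * (a * (1 - a))⁻¹ * c ^ (1 - a) := by
  have bound_integrable : IntegrableOn (fun r ↦ A * (r ^ (-a) * min 1 (c / r))) (Ioi 0) :=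
    (integrableOn_Ioi_zero_rpow_neg_mul_min ha ha' hc).const_mul A
  calc ∫ r in Ioo 0 s, F r
      ≤ ∫ r in Ioo 0 s, A * (r ^ (-a) * min 1 (c / r)) := by
        refine integral_mono_of_nonneg ?_ (bound_integrable.mono_set Ioo_subset_Ioi_self) ?_ <;>
          filter_upwards [ae_restrict_mem measurableSet_Ioo] with r hr
        exacts [hF0 r hr.1, hF r hr.1]
    _ ≤ ∫ r in Ioi 0, A * (r ^ (-a) * min 1 (c / r)) := by
        refine setIntegral_mono_set bound_integrable ?_ (.of_forall Ioo_subset_Ioi_self)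
        filter_upwards [ae_restrict_mem measurableSet_Ioi] with r hr
        exact (hF0 r hr).trans (hF r hr)
    _ = A * (a * (1 - a))⁻¹ * c ^ (1 - a) := by
        rw [integral_const_mul, integral_Ioi_zero_rpow_neg_mul_min ha ha' hc, mul_assoc]

end TimeIntegral

theorem stmt_10 (k : ℕ) (hk : 1 ≤ k) (β : ℝ) (hβ : 0 < β) (hβ2 : β < min 2 (k : ℝ)) :
    ∃ C : ℝ, 0 < C ∧
      ∀ s : ℝ, 0 ≤ s → ∀ x y : EuclideanSpace ℝ (Fin k),
        (∫ r in Set.Ioo (0:ℝ) s, ∫ z : EuclideanSpace ℝ (Fin k),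
            ∫ v : EuclideanSpace ℝ (Fin k),
              ‖z - v‖ ^ (-β) * |heatKernel k r (x - z) - heatKernel k r (y - z)| *
                |heatKernel k r (x - v) - heatKernel k r (y - v)|) ≤
          C * ‖x - y‖ ^ (2 - β) := by
  obtain ⟨hβ_two, hβk⟩ := lt_min_iff.1 hβ2
  obtain ⟨A, hA, energy_le⟩ := exists_rieszEnergy_heatKernel_sub_le hβ.le hβk
  have half_pos : 0 < β / 2 := half_pos hβ
  have half_lt_one : β / 2 < 1 := by linarith
  refine ⟨A * (β / 2 * (1 - β / 2))⁻¹,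
    mul_pos hA (inv_pos.2 (mul_pos half_pos (sub_pos.2 half_lt_one))), fun s _ x y ↦ ?_⟩
  have rpow_eq : ‖x - y‖ ^ (2 - β) = (‖x - y‖ ^ 2) ^ (1 - β / 2) := by
    rw [← rpow_natCast_mul (norm_nonneg _)]; ring_nf
  rw [rpow_eq]
  exact setIntegral_Ioo_le_of_le_rpow_neg_mul_min half_pos half_lt_one (sq_nonneg _)
    (fun r _ ↦ rieszEnergy_nonneg volume β fun _ ↦ abs_nonneg _) (fun r hr ↦ energy_le r hr x y) s
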